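/- Let A be a self-adjoint trace class operator on a real separable Hilbert space K = l²(Γ), and let ω_D be the centered Gaussian measure on ℝ^Γ with bounded strictly positive covariance D. Then the quadratic form q_A(x) = (x, A x) on K extends uniquely to an element of L¹(ω_D) with L¹-norm at most ‖D‖·‖A‖₁, and ∫ q_A dω_D = tr(D A). -/

import Mathlib

open MeasureTheory RealInnerProductSpace Filter

/-- `K = ℓ²(ℕ, ℝ)`. -/
noncomputable abbrev Ksp : Type := lp (fun _ : ℕ => ℝ) 2

/-- `μ` is the centered Gaussian measure on `ℝ^ℕ` with covariance `D`, expressed through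
its characteristic function on finitely supported `y`:
`∫ e^{i (y,x)} dμ(x) = e^{−(y, D y)/2}`. -/
def IsGaussianCov (μ : Measure (ℕ → ℝ)) (D : Ksp →L[ℝ] Ksp) : Prop :=
  ∀ (s : Finset ℕ) (c : ℕ → ℝ),
    ∫ x, Complex.exp (Complex.I * ((∑ n ∈ s, c n * x n : ℝ) : ℂ)) ∂μ =
      Complex.exp (-(((∑ n ∈ s, ∑ m ∈ s,
        c n * c m * ⟪lp.single 2 n (1 : ℝ), D (lp.single 2 m (1 : ℝ))⟫ : ℝ) : ℂ) / 2))

/-- The `N`-th cylinder approximation `(x_{[0,N)}, A x_{[0,N)}) = ∑_{n,m<N} A_{nm} x_n x_m`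
of the quadratic form of `A`. -/
noncomputable def cylQuadForm (A : Ksp →L[ℝ] Ksp) (N : ℕ) (x : ℕ → ℝ) : ℝ :=
  ∑ n ∈ Finset.range N, ∑ m ∈ Finset.range N,
    ⟪lp.single 2 n (1 : ℝ), A (lp.single 2 m (1 : ℝ))⟫ * x n * x m

/-- The finite-dimensional truncation `y_{[0,N)}` as an element of `ℓ²`. -/
noncomputable def trunc (N : ℕ) (y : ℕ → ℝ) : Ksp :=
  ∑ n ∈ Finset.range N, lp.single 2 n (y n)

lemma trunc_apply (N : ℕ) (y : ℕ → ℝ) (n : ℕ) :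
    trunc N y n = if n < N then y n else 0 := by
  rw [trunc, lp.coeFn_sum, Finset.sum_apply]
  simp only [lp.coeFn_single, Pi.single_apply]
  simp

lemma trunc_add (N : ℕ) (y z : ℕ → ℝ) : trunc N (y + z) = trunc N y + trunc N z := by
  simp [trunc, Finset.sum_add_distrib]

lemma trunc_sub (N : ℕ) (y z : ℕ → ℝ) : trunc N (y - z) = trunc N y - trunc N z := by
  simp [trunc, Finset.sum_sub_distrib]

lemma trunc_trunc_of_le {M L : ℕ} (h : M ≤ L) (y : ℕ → ℝ) : trunc L (trunc M y) = trunc M y := by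
  ext n
  simp only [trunc_apply]
  split_ifs with h1 h2 <;> first | rfl | omega

lemma sum_trunc_mul_of_le {M L : ℕ} (h : M ≤ L) (y x : ℕ → ℝ) :
    ∑ n ∈ Finset.range L, trunc M y n * x n = ∑ n ∈ Finset.range M, y n * x n := by
  rw [← Finset.sum_subset (Finset.range_mono h) fun n _ hn => by
    simp [trunc_apply, Finset.mem_range.not.1 hn]]
  exact Finset.sum_congr rfl fun n hn => by simp [trunc_apply, Finset.mem_range.1 hn]

lemma tendsto_trunc (y : Ksp) : Tendsto (fun N => trunc N y) atTop (nhds y) :=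
  (lp.hasSum_single (by simp) y).tendsto_sum_nat

lemma norm_trunc_le (N : ℕ) (y : Ksp) : ‖trunc N y‖ ≤ ‖y‖ := by
  have h2 : (0 : ℝ) < (2 : ENNReal).toReal := by simp
  have h := lp.norm_sum_single (E := fun _ : ℕ => ℝ) h2 y (Finset.range N)
  refine (Real.rpow_le_rpow_iff (norm_nonneg _) (norm_nonneg _) h2).1 ?_
  rw [trunc, h]
  exact lp.sum_rpow_le_norm_rpow h2 y _

lemma inner_trunc_right (N : ℕ) (y : Ksp) (x : ℕ → ℝ) :
    ⟪y, trunc N x⟫ = ∑ n ∈ Finset.range N, y n * x n := by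
  rw [trunc, inner_sum]
  refine Finset.sum_congr rfl fun n _ => ?_
  rw [lp.inner_single_right]
  simp [mul_comm]

lemma single_eq_smul (n : ℕ) (r : ℝ) :
    (lp.single 2 n r : Ksp) = r • lp.single 2 n (1 : ℝ) := by
  rw [← lp.single_smul]
  simp

lemma cylQuadForm_eq_inner (A : Ksp →L[ℝ] Ksp) (N : ℕ) (x : ℕ → ℝ) :
    cylQuadForm A N x = ⟪trunc N x, A (trunc N x)⟫ := by
  simp only [cylQuadForm, trunc, map_sum]
  rw [sum_inner]
  simp only [inner_sum]
  refine Finset.sum_congr rfl fun n _ => Finset.sum_congr rfl fun m _ => ?_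
  rw [single_eq_smul n (x n), single_eq_smul m (x m), map_smul, real_inner_smul_left,
    real_inner_smul_right]
  ring

lemma abs_inner_apply_le (D : Ksp →L[ℝ] Ksp) (y z : Ksp) :
    |⟪y, D z⟫| ≤ ‖D‖ * ‖y‖ * ‖z‖ := by
  calc |⟪y, D z⟫| ≤ ‖y‖ * ‖D z‖ := abs_real_inner_le_norm _ _
    _ ≤ ‖y‖ * (‖D‖ * ‖z‖) := by gcongr; exact D.le_opNorm z
    _ = ‖D‖ * ‖y‖ * ‖z‖ := by ring

section Spectral

variable {A : Ksp →L[ℝ] Ksp} {a : ℕ → ℝ} {φ : ℕ → Ksp}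

lemma abs_inner_le_of_orthonormal (horth : Orthonormal ℝ φ) (k : ℕ) (x : Ksp) :
    |⟪φ k, x⟫| ≤ ‖x‖ := by
  simpa [horth.1 k] using abs_real_inner_le_norm (φ k) x

lemma summable_mul_inner_sq (horth : Orthonormal ℝ φ) (hsum : Summable fun k => |a k|) (x : Ksp) :
    Summable fun k => |a k * ⟪φ k, x⟫ ^ 2| := by
  refine Summable.of_nonneg_of_le (fun k => abs_nonneg _) (fun k => ?_) (hsum.mul_right (‖x‖ ^ 2))
  rw [abs_mul, abs_pow]
  gcongr
  exact abs_inner_le_of_orthonormal horth k x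

lemma inner_apply_eq_tsum (horth : Orthonormal ℝ φ) (hsum : Summable fun k => |a k|)
    (hA : ∀ x : Ksp, A x = ∑' k, (a k * ⟪φ k, x⟫) • φ k) (x : Ksp) :
    ⟪x, A x⟫ = ∑' k, a k * ⟪φ k, x⟫ ^ 2 := by
  have hs : Summable fun k => (a k * ⟪φ k, x⟫) • φ k := by
    refine Summable.of_norm_bounded (hsum.mul_right ‖x‖) fun k => ?_
    rw [norm_smul, horth.1 k, mul_one, Real.norm_eq_abs, abs_mul]
    gcongr
    exact abs_inner_le_of_orthonormal horth k x
  have h := (innerSL ℝ x).map_tsum hs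
  simp only [innerSL_apply_apply] at h
  rw [hA x, h]
  refine tsum_congr fun k => ?_
  rw [real_inner_smul_right, real_inner_comm]
  ring

end Spectral

section L1

variable {α : Type*} [MeasurableSpace α] {μ : Measure α}

lemma integral_abs_tsum_le {f : ℕ → α → ℝ} (hf : ∀ k, Integrable (f k) μ)
    (hint : Summable fun k => ∫ x, |f k x| ∂μ) (hF : Integrable (fun x => ∑' k, f k x) μ) :
    ∫ x, |∑' k, f k x| ∂μ ≤ ∑' k, ∫ x, |f k x| ∂μ := by
  have hnn (k : ℕ) : 0 ≤ ∫ x, |f k x| ∂μ := integral_nonneg fun x => abs_nonneg _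
  rw [← ENNReal.ofReal_le_ofReal_iff (tsum_nonneg hnn), ENNReal.ofReal_tsum_of_nonneg hnn hint]
  simp only [← Real.norm_eq_abs]
  rw [ofReal_integral_norm_eq_lintegral_enorm hF]
  simp only [ofReal_integral_norm_eq_lintegral_enorm (hf _)]
  rw [← lintegral_tsum fun k => (hf k).aestronglyMeasurable.enorm]
  exact lintegral_mono fun x => enorm_tsum_le_tsum_enorm

lemma ae_eq_of_tendsto_integral_abs_sub {f : ℕ → α → ℝ} (hf : ∀ N, Integrable (f N) μ)
    {q q' : α → ℝ} (hq : Integrable q μ) (hq' : Integrable q' μ)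
    (h : Tendsto (fun N => ∫ x, |q x - f N x| ∂μ) atTop (nhds 0))
    (h' : Tendsto (fun N => ∫ x, |q' x - f N x| ∂μ) atTop (nhds 0)) : q' =ᵐ[μ] q := by
  have hle : ∫ x, |q' x - q x| ∂μ ≤ 0 := by
    have hlim := h'.add h
    rw [add_zero] at hlim
    refine ge_of_tendsto' hlim fun N => ?_
    have h1 : Integrable (fun x => |q' x - f N x|) μ := (hq'.sub (hf N)).abs
    have h2 : Integrable (fun x => |q x - f N x|) μ := (hq.sub (hf N)).abs
    rw [← integral_add h1 h2]
    refine integral_mono (hq'.sub hq).abs (h1.add h2) fun x => ?_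
    simpa [abs_sub_comm] using abs_sub_le (q' x) (f N x) (q x)
  have h0 : ∫ x, |q' x - q x| ∂μ = 0 := le_antisymm hle (integral_nonneg fun x => abs_nonneg _)
  filter_upwards [(integral_eq_zero_iff_of_nonneg (fun x => abs_nonneg _) (hq'.sub hq).abs).1 h0] with x hx
  exact sub_eq_zero.1 (abs_eq_zero.1 hx)

lemma exists_tendsto_integral_abs_sub {f : ℕ → α → ℝ} (hf : ∀ N, Integrable (f N) μ)
    {b : ℕ → ℝ} (hb : Tendsto b atTop (nhds 0))
    (hfb : ∀ M N, ∫ x, |f M x - f N x| ∂μ ≤ b M + b N) :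
    ∃ q : α → ℝ, Integrable q μ ∧ Tendsto (fun N => ∫ x, |q x - f N x| ∂μ) atTop (nhds 0) := by
  have hdist (M : ℕ) (g : α →₁[μ] ℝ) :
      dist g ((hf M).toL1 (f M)) = ∫ x, |g x - f M x| ∂μ := by
    rw [L1.dist_eq_integral_dist]
    refine integral_congr_ae ?_
    filter_upwards [(hf M).coeFn_toL1] with x hx
    rw [hx, Real.dist_eq]
  have hdist' (M N : ℕ) :
      dist ((hf M).toL1 (f M)) ((hf N).toL1 (f N)) = ∫ x, |f M x - f N x| ∂μ := by
    rw [hdist]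
    refine integral_congr_ae ?_
    filter_upwards [(hf M).coeFn_toL1] with x hx
    rw [hx]
  have hc : CauchySeq fun N => (hf N).toL1 (f N) := by
    rw [Metric.cauchySeq_iff]
    intro ε hε
    obtain ⟨N, hN⟩ := (hb.eventually (gt_mem_nhds (half_pos hε))).exists_forall_of_atTop
    refine ⟨N, fun m hm n hn => ?_⟩
    rw [hdist']
    linarith [hfb m n, hN m hm, hN n hn]
  obtain ⟨g, hg⟩ := cauchySeq_tendsto_of_complete hc
  refine ⟨g, L1.integrable_coeFn g, ?_⟩
  simpa only [dist_comm, hdist] using tendsto_iff_dist_tendsto_zero.1 hg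

lemma tendsto_integral_of_tendsto_integral_abs_sub {f : ℕ → α → ℝ}
    (hf : ∀ N, Integrable (f N) μ) {q : α → ℝ} (hq : Integrable q μ)
    (h : Tendsto (fun N => ∫ x, |q x - f N x| ∂μ) atTop (nhds 0)) :
    Tendsto (fun N => ∫ x, f N x ∂μ) atTop (nhds (∫ x, q x ∂μ)) := by
  rw [tendsto_iff_dist_tendsto_zero]
  refine squeeze_zero (fun _ => dist_nonneg) (fun N => ?_) h
  rw [dist_comm, Real.dist_eq, ← integral_sub hq (hf N)]
  exact abs_integral_le_integral_abs

lemma tendsto_integral_abs_of_tendsto_integral_abs_sub {f : ℕ → α → ℝ}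
    (hf : ∀ N, Integrable (f N) μ) {q : α → ℝ} (hq : Integrable q μ)
    (h : Tendsto (fun N => ∫ x, |q x - f N x| ∂μ) atTop (nhds 0)) :
    Tendsto (fun N => ∫ x, |f N x| ∂μ) atTop (nhds (∫ x, |q x| ∂μ)) := by
  refine tendsto_integral_of_tendsto_integral_abs_sub (fun N => (hf N).abs) hq.abs
    (squeeze_zero (fun N => integral_nonneg fun x => abs_nonneg _) (fun N => ?_) h)
  exact integral_mono (hq.abs.sub (hf N).abs).abs (hq.sub (hf N)).abs
    fun x => abs_abs_sub_abs_le _ _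

lemma integral_abs_mul_le_sqrt {f g : α → ℝ} (hf : MemLp f 2 μ) (hg : MemLp g 2 μ) :
    ∫ x, |f x * g x| ∂μ ≤ √(∫ x, f x ^ 2 ∂μ) * √(∫ x, g x ^ 2 ∂μ) := by
  have h2 : ENNReal.ofReal 2 = 2 := by simp
  have h := integral_mul_norm_le_Lp_mul_Lq (μ := μ) (f := f) (g := g) Real.HolderConjugate.two_two
    (by rwa [h2]) (by rwa [h2])
  simpa [abs_mul, Real.sqrt_eq_rpow] using h

end L1

section Gaussian

variable {μ : Measure (ℕ → ℝ)} {D : Ksp →L[ℝ] Ksp}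

lemma inner_trunc_apply_trunc (D : Ksp →L[ℝ] Ksp) (N : ℕ) (c : ℕ → ℝ) :
    ⟪trunc N c, D (trunc N c)⟫ = ∑ n ∈ Finset.range N, ∑ m ∈ Finset.range N,
      c n * c m * ⟪lp.single 2 n (1 : ℝ), D (lp.single 2 m (1 : ℝ))⟫ := by
  rw [← cylQuadForm_eq_inner, cylQuadForm]
  exact Finset.sum_congr rfl fun n _ => Finset.sum_congr rfl fun m _ => by ring

lemma IsGaussianCov.map_sum_eq_gaussianReal [IsProbabilityMeasure μ] (hgauss : IsGaussianCov μ D)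
    (hDnn : ∀ y : Ksp, 0 ≤ ⟪y, D y⟫) (N : ℕ) (c : ℕ → ℝ) :
    μ.map (fun x => ∑ n ∈ Finset.range N, c n * x n) =
      ProbabilityTheory.gaussianReal 0 ⟪trunc N c, D (trunc N c)⟫.toNNReal := by
  have hm : Measurable fun x : ℕ → ℝ => ∑ n ∈ Finset.range N, c n * x n := by fun_prop
  have := Measure.isProbabilityMeasure_map (μ := μ) hm.aemeasurable
  refine Measure.ext_of_charFun (funext fun t => ?_)
  rw [charFun_apply_real, integral_map hm.aemeasurable (by fun_prop),
    ProbabilityTheory.charFun_gaussianReal, Real.coe_toNNReal _ (hDnn _)]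
  have h := hgauss (Finset.range N) (fun n => t * c n)
  rw [inner_trunc_apply_trunc]
  convert h using 2
  · funext x
    congr 1
    push_cast
    rw [Finset.mul_sum, Finset.sum_mul, Finset.mul_sum]
    exact Finset.sum_congr rfl fun n _ => by ring
  · push_cast
    simp only [mul_zero, zero_mul, zero_sub]
    rw [neg_inj, Finset.sum_mul]
    congr 1
    refine Finset.sum_congr rfl fun n _ => ?_
    rw [Finset.sum_mul]
    exact Finset.sum_congr rfl fun m _ => by ring

lemma IsGaussianCov.memLp_sum [IsProbabilityMeasure μ] (hgauss : IsGaussianCov μ D)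
    (hDnn : ∀ y : Ksp, 0 ≤ ⟪y, D y⟫) (N : ℕ) (c : ℕ → ℝ) :
    MemLp (fun x => ∑ n ∈ Finset.range N, c n * x n) 2 μ := by
  have hm : Measurable fun x : ℕ → ℝ => ∑ n ∈ Finset.range N, c n * x n := by fun_prop
  have h := ProbabilityTheory.memLp_id_gaussianReal' (μ := 0)
    (v := ⟪trunc N c, D (trunc N c)⟫.toNNReal) 2 (by simp)
  rw [← hgauss.map_sum_eq_gaussianReal hDnn N c,
    memLp_map_measure_iff (by fun_prop) hm.aemeasurable] at h
  exact h

lemma IsGaussianCov.integral_sum_sq [IsProbabilityMeasure μ] (hgauss : IsGaussianCov μ D)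
    (hDnn : ∀ y : Ksp, 0 ≤ ⟪y, D y⟫) (N : ℕ) (c : ℕ → ℝ) :
    ∫ x, (∑ n ∈ Finset.range N, c n * x n) ^ 2 ∂μ = ⟪trunc N c, D (trunc N c)⟫ := by
  have hm : Measurable fun x : ℕ → ℝ => ∑ n ∈ Finset.range N, c n * x n := by fun_prop
  have h := ProbabilityTheory.variance_fun_id_gaussianReal (μ := 0)
    (v := ⟪trunc N c, D (trunc N c)⟫.toNNReal)
  rw [ProbabilityTheory.variance_of_integral_eq_zero (by fun_prop)
    ProbabilityTheory.integral_id_gaussianReal,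
    ← hgauss.map_sum_eq_gaussianReal hDnn N c, integral_map hm.aemeasurable (by fun_prop),
    Real.coe_toNNReal _ (hDnn _)] at h
  exact h

lemma IsGaussianCov.integrable_sum_sq [IsProbabilityMeasure μ] (hgauss : IsGaussianCov μ D)
    (hDnn : ∀ y : Ksp, 0 ≤ ⟪y, D y⟫) (N : ℕ) (c : ℕ → ℝ) :
    Integrable (fun x => (∑ n ∈ Finset.range N, c n * x n) ^ 2) μ :=
  (hgauss.memLp_sum hDnn N c).integrable_sq

lemma IsGaussianCov.sqrt_integral_sum_sq_le [IsProbabilityMeasure μ] (hgauss : IsGaussianCov μ D)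
    (hDnn : ∀ y : Ksp, 0 ≤ ⟪y, D y⟫) (N : ℕ) (c : ℕ → ℝ) :
    √(∫ x, (∑ n ∈ Finset.range N, c n * x n) ^ 2 ∂μ) ≤ √‖D‖ * ‖trunc N c‖ := by
  rw [hgauss.integral_sum_sq hDnn, Real.sqrt_le_left (by positivity), mul_pow,
    Real.sq_sqrt (norm_nonneg _)]
  exact (le_abs_self _).trans ((abs_inner_apply_le D _ _).trans_eq (by ring))

lemma IsGaussianCov.integral_abs_sum_sq_sub_sum_sq_le [IsProbabilityMeasure μ]
    (hgauss : IsGaussianCov μ D) (hDnn : ∀ y : Ksp, 0 ≤ ⟪y, D y⟫) (M N : ℕ) (y : ℕ → ℝ) :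
    ∫ x, |(∑ n ∈ Finset.range M, y n * x n) ^ 2 - (∑ n ∈ Finset.range N, y n * x n) ^ 2| ∂μ ≤
      ‖D‖ * ‖trunc M y - trunc N y‖ * ‖trunc M y + trunc N y‖ := by
  set L := max M N
  have hM : M ≤ L := le_max_left _ _
  have hN : N ≤ L := le_max_right _ _
  let c : ℕ → ℝ := ⇑(trunc M y) - ⇑(trunc N y)
  let d : ℕ → ℝ := ⇑(trunc M y) + ⇑(trunc N y)
  have hc : trunc L c = trunc M y - trunc N y := by
    rw [trunc_sub, trunc_trunc_of_le hM, trunc_trunc_of_le hN]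
  have hd : trunc L d = trunc M y + trunc N y := by
    rw [trunc_add, trunc_trunc_of_le hM, trunc_trunc_of_le hN]
  have hprod (x : ℕ → ℝ) :
      (∑ n ∈ Finset.range M, y n * x n) ^ 2 - (∑ n ∈ Finset.range N, y n * x n) ^ 2 =
        (∑ n ∈ Finset.range L, c n * x n) * ∑ n ∈ Finset.range L, d n * x n := by
    simp only [c, d, Pi.sub_apply, Pi.add_apply, sub_mul, add_mul, Finset.sum_sub_distrib,
      Finset.sum_add_distrib, sum_trunc_mul_of_le hM, sum_trunc_mul_of_le hN]
    ring
  simp only [hprod]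
  calc _ ≤ _ := integral_abs_mul_le_sqrt (hgauss.memLp_sum hDnn L c) (hgauss.memLp_sum hDnn L d)
    _ ≤ (√‖D‖ * ‖trunc L c‖) * (√‖D‖ * ‖trunc L d‖) := by
      gcongr <;> exact hgauss.sqrt_integral_sum_sq_le hDnn L _
    _ = _ := by
      rw [hc, hd, mul_mul_mul_comm, Real.mul_self_sqrt (norm_nonneg _), mul_assoc]

end Gaussian

lemma cylQuadForm_eq_tsum {A : Ksp →L[ℝ] Ksp} {a : ℕ → ℝ} {φ : ℕ → Ksp} (horth : Orthonormal ℝ φ)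
    (hsum : Summable fun k => |a k|)
    (hA : ∀ x : Ksp, A x = ∑' k, (a k * ⟪φ k, x⟫) • φ k) (N : ℕ) (x : ℕ → ℝ) :
    cylQuadForm A N x = ∑' k, a k * (∑ n ∈ Finset.range N, φ k n * x n) ^ 2 := by
  simp only [cylQuadForm_eq_inner, inner_apply_eq_tsum horth hsum hA, inner_trunc_right]

section CylQuadForm

variable {μ : Measure (ℕ → ℝ)} [IsProbabilityMeasure μ] {D A : Ksp →L[ℝ] Ksp} {a : ℕ → ℝ}
  {φ : ℕ → Ksp}

lemma IsGaussianCov.integrable_cylQuadForm (hgauss : IsGaussianCov μ D)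
    (hDnn : ∀ y : Ksp, 0 ≤ ⟪y, D y⟫) (A : Ksp →L[ℝ] Ksp) (N : ℕ) :
    Integrable (cylQuadForm A N) μ := by
  have hcoord (n : ℕ) : MemLp (fun x : ℕ → ℝ => x n) 2 μ := by
    simpa [Pi.single_apply] using hgauss.memLp_sum hDnn (n + 1) (Pi.single n 1)
  refine integrable_finsetSum _ fun n _ => integrable_finsetSum _ fun m _ => ?_
  simp only [mul_assoc]
  exact ((hcoord n).integrable_mul (hcoord m)).const_mul _

lemma inner_trunc_apply_trunc_le (D : Ksp →L[ℝ] Ksp) {y : Ksp} (hy : ‖y‖ = 1) (N : ℕ) :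
    |⟪trunc N y, D (trunc N y)⟫| ≤ ‖D‖ := by
  have h := norm_trunc_le N y
  rw [hy] at h
  calc _ ≤ ‖D‖ * ‖trunc N y‖ * ‖trunc N y‖ := abs_inner_apply_le D _ _
    _ ≤ ‖D‖ * 1 * 1 := by gcongr
    _ = ‖D‖ := by ring

lemma IsGaussianCov.integral_abs_mul_sum_sq_le (hgauss : IsGaussianCov μ D)
    (hDnn : ∀ y : Ksp, 0 ≤ ⟪y, D y⟫) {y : Ksp} (hy : ‖y‖ = 1) (r : ℝ) (N : ℕ) :
    ∫ x, |r * (∑ n ∈ Finset.range N, y n * x n) ^ 2| ∂μ ≤ ‖D‖ * |r| := by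
  simp only [abs_mul, abs_pow, sq_abs]
  rw [integral_const_mul, hgauss.integral_sum_sq hDnn, mul_comm]
  gcongr
  exact (le_abs_self _).trans (inner_trunc_apply_trunc_le D hy N)

lemma IsGaussianCov.summable_integral_abs (hgauss : IsGaussianCov μ D)
    (hDnn : ∀ y : Ksp, 0 ≤ ⟪y, D y⟫) (horth : Orthonormal ℝ φ) (hsum : Summable fun k => |a k|)
    (N : ℕ) :
    Summable fun k => ∫ x, |a k * (∑ n ∈ Finset.range N, φ k n * x n) ^ 2| ∂μ :=
  Summable.of_nonneg_of_le (fun _ => integral_nonneg fun _ => abs_nonneg _)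
    (fun k => hgauss.integral_abs_mul_sum_sq_le hDnn (horth.1 k) (a k) N) (hsum.mul_left ‖D‖)

lemma IsGaussianCov.integral_cylQuadForm (hgauss : IsGaussianCov μ D)
    (hDnn : ∀ y : Ksp, 0 ≤ ⟪y, D y⟫) (horth : Orthonormal ℝ φ) (hsum : Summable fun k => |a k|)
    (hA : ∀ x : Ksp, A x = ∑' k, (a k * ⟪φ k, x⟫) • φ k) (N : ℕ) :
    ∫ x, cylQuadForm A N x ∂μ = ∑' k, a k * ⟪trunc N (φ k), D (trunc N (φ k))⟫ := by
  simp only [cylQuadForm_eq_tsum horth hsum hA]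
  rw [← integral_tsum_of_summable_integral_norm
    (fun k => (hgauss.integrable_sum_sq hDnn N (φ k)).const_mul (a k))
    (hgauss.summable_integral_abs hDnn horth hsum N)]
  simp only [integral_const_mul, hgauss.integral_sum_sq hDnn]

lemma IsGaussianCov.integral_abs_cylQuadForm_le (hgauss : IsGaussianCov μ D)
    (hDnn : ∀ y : Ksp, 0 ≤ ⟪y, D y⟫) (horth : Orthonormal ℝ φ) (hsum : Summable fun k => |a k|)
    (hA : ∀ x : Ksp, A x = ∑' k, (a k * ⟪φ k, x⟫) • φ k) (N : ℕ) :
    ∫ x, |cylQuadForm A N x| ∂μ ≤ ‖D‖ * ∑' k, |a k| := by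
  have hF := hgauss.integrable_cylQuadForm hDnn A N
  have hs := hgauss.summable_integral_abs hDnn horth hsum N
  simp only [funext (cylQuadForm_eq_tsum horth hsum hA N)] at hF ⊢
  refine (integral_abs_tsum_le
    (fun k => (hgauss.integrable_sum_sq hDnn N (φ k)).const_mul (a k)) hs hF).trans ?_
  rw [← tsum_mul_left]
  exact hs.tsum_le_tsum
    (fun k => hgauss.integral_abs_mul_sum_sq_le hDnn (horth.1 k) (a k) N) (hsum.mul_left ‖D‖)

lemma summable_mul_norm_sub_trunc (horth : Orthonormal ℝ φ) (hsum : Summable fun k => |a k|)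
    (N : ℕ) : Summable fun k => |a k| * ‖φ k - trunc N (φ k)‖ := by
  refine Summable.of_nonneg_of_le (fun k => by positivity) (fun k => ?_) (hsum.mul_right 2)
  gcongr
  linarith [norm_sub_le (φ k) (trunc N (φ k)), norm_trunc_le N (φ k), horth.1 k]

lemma tendsto_tsum_mul_norm_sub_trunc (horth : Orthonormal ℝ φ)
    (hsum : Summable fun k => |a k|) :
    Tendsto (fun N => ∑' k, |a k| * ‖φ k - trunc N (φ k)‖) atTop (nhds 0) := by
  have h := tendsto_tsum_of_dominated_convergence (𝓕 := atTop)
    (f := fun N k => |a k| * ‖φ k - trunc N (φ k)‖) (g := fun k => |a k| * ‖φ k - φ k‖)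
    (hsum.mul_right 2)
    (fun k => ((tendsto_const_nhds.sub (tendsto_trunc (φ k))).norm).const_mul _)
    (Eventually.of_forall fun N k => by
      rw [Real.norm_of_nonneg (by positivity)]
      gcongr
      linarith [norm_sub_le (φ k) (trunc N (φ k)), norm_trunc_le N (φ k), horth.1 k])
  simpa using h

lemma tendsto_tsum_inner_trunc (D : Ksp →L[ℝ] Ksp) (horth : Orthonormal ℝ φ)
    (hsum : Summable fun k => |a k|) :
    Tendsto (fun N => ∑' k, a k * ⟪trunc N (φ k), D (trunc N (φ k))⟫) atTop
      (nhds (∑' k, a k * ⟪φ k, D (φ k)⟫)) := by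
  refine tendsto_tsum_of_dominated_convergence (hsum.mul_right ‖D‖) (fun k => ?_)
    (Eventually.of_forall fun N k => ?_)
  · have h := tendsto_trunc (φ k)
    exact (h.inner ((D.continuous.tendsto _).comp h)).const_mul _
  · rw [Real.norm_eq_abs, abs_mul]
    gcongr
    exact inner_trunc_apply_trunc_le D (horth.1 k) N

lemma IsGaussianCov.integral_abs_cylQuadForm_sub_le (hgauss : IsGaussianCov μ D)
    (hDnn : ∀ y : Ksp, 0 ≤ ⟪y, D y⟫) (horth : Orthonormal ℝ φ) (hsum : Summable fun k => |a k|)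
    (hA : ∀ x : Ksp, A x = ∑' k, (a k * ⟪φ k, x⟫) • φ k) (M N : ℕ) :
    ∫ x, |cylQuadForm A M x - cylQuadForm A N x| ∂μ ≤
      2 * ‖D‖ * (∑' k, |a k| * ‖φ k - trunc M (φ k)‖) +
        2 * ‖D‖ * ∑' k, |a k| * ‖φ k - trunc N (φ k)‖ := by
  set f : ℕ → (ℕ → ℝ) → ℝ := fun k x => a k * ((∑ n ∈ Finset.range M, φ k n * x n) ^ 2 -
    (∑ n ∈ Finset.range N, φ k n * x n) ^ 2) with hfdef
  have hdiff (x : ℕ → ℝ) : cylQuadForm A M x - cylQuadForm A N x = ∑' k, f k x := by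
    have hs (L : ℕ) := (summable_mul_inner_sq horth hsum (trunc L x)).of_abs
    simp only [inner_trunc_right] at hs
    simp only [cylQuadForm_eq_tsum horth hsum hA, hfdef, mul_sub]
    rw [(hs M).tsum_sub (hs N)]
  have hf (k : ℕ) : Integrable (f k) μ :=
    ((hgauss.integrable_sum_sq hDnn M (φ k)).sub
      (hgauss.integrable_sum_sq hDnn N (φ k))).const_mul (a k)
  have hF : Integrable (fun x => ∑' k, f k x) μ := by
    simp only [← hdiff]
    exact (hgauss.integrable_cylQuadForm hDnn A M).sub (hgauss.integrable_cylQuadForm hDnn A N)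
  have hle (k : ℕ) : ∫ x, |f k x| ∂μ ≤ 2 * ‖D‖ * (|a k| * ‖φ k - trunc M (φ k)‖) +
      2 * ‖D‖ * (|a k| * ‖φ k - trunc N (φ k)‖) := by
    have h1 : ‖trunc M (φ k) + trunc N (φ k)‖ ≤ 2 := by
      linarith [norm_add_le (trunc M (φ k)) (trunc N (φ k)), norm_trunc_le M (φ k),
        norm_trunc_le N (φ k), horth.1 k]
    have h2 : ‖trunc M (φ k) - trunc N (φ k)‖ ≤
        ‖φ k - trunc M (φ k)‖ + ‖φ k - trunc N (φ k)‖ := by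
      rw [norm_sub_rev (φ k) (trunc M (φ k))]
      exact norm_sub_le_norm_sub_add_norm_sub _ _ _
    simp only [hfdef, abs_mul]
    rw [integral_const_mul]
    calc _ ≤ |a k| * (‖D‖ * ‖trunc M (φ k) - trunc N (φ k)‖ *
            ‖trunc M (φ k) + trunc N (φ k)‖) := by
          gcongr
          exact hgauss.integral_abs_sum_sq_sub_sum_sq_le hDnn M N (φ k)
      _ ≤ |a k| * (‖D‖ * (‖φ k - trunc M (φ k)‖ + ‖φ k - trunc N (φ k)‖) * 2) := by gcongr
      _ = _ := by ring
  have hM := (summable_mul_norm_sub_trunc horth hsum M).mul_left (2 * ‖D‖)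
  have hN := (summable_mul_norm_sub_trunc horth hsum N).mul_left (2 * ‖D‖)
  have hs : Summable fun k => ∫ x, |f k x| ∂μ :=
    Summable.of_nonneg_of_le (fun k => integral_nonneg fun x => abs_nonneg _) hle (hM.add hN)
  simp only [hdiff]
  refine (integral_abs_tsum_le hf hs hF).trans ?_
  rw [← tsum_mul_left, ← tsum_mul_left, ← hM.tsum_add hN]
  exact hs.tsum_le_tsum hle (hM.add hN)

end CylQuadForm

/-- Let `A` be a self-adjoint trace class operator on `K = ℓ²(ℕ)`
(encoded by its spectral representation: an orthonormal family `φ` and a summable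
eigenvalue sequence `a`, so that `‖A‖₁ = ∑ |a_k|` and `tr(D A) = ∑ a_k (φ_k, D φ_k)`),
and let `ω_D` be the centered Gaussian measure on `ℝ^ℕ` with bounded strictly positive
covariance `D`.  Then the quadratic form `q_A(x) = (x, A x)` extends uniquely (as the
`L¹(ω_D)`-limit of its cylinder approximations) to an element `q` of `L¹(ω_D)`, with
`‖q‖₁ ≤ ‖D‖ ‖A‖₁` and `∫ q dω_D = tr(D A)`. -/
theorem stmt0 (μ : Measure (ℕ → ℝ)) [IsProbabilityMeasure μ]
    (D : Ksp →L[ℝ] Ksp) (hD : IsSelfAdjoint D)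
    (hDpos : ∃ c > 0, ∀ y : Ksp, c * ‖y‖ ^ 2 ≤ ⟪y, D y⟫)
    (hgauss : IsGaussianCov μ D)
    (A : Ksp →L[ℝ] Ksp) (a : ℕ → ℝ) (φ : ℕ → Ksp) (horth : Orthonormal ℝ φ)
    (hsum : Summable fun k => |a k|)
    (hA : ∀ x : Ksp, A x = ∑' k, (a k * ⟪φ k, x⟫) • φ k) :
    ∃ q : (ℕ → ℝ) → ℝ, Integrable q μ ∧
      Tendsto (fun N => ∫ x, |q x - cylQuadForm A N x| ∂μ) atTop (nhds 0) ∧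
      (∫ x, |q x| ∂μ) ≤ ‖D‖ * ∑' k, |a k| ∧
      (∫ x, q x ∂μ) = ∑' k, a k * ⟪φ k, D (φ k)⟫ ∧
      ∀ q' : (ℕ → ℝ) → ℝ, Integrable q' μ →
        Tendsto (fun N => ∫ x, |q' x - cylQuadForm A N x| ∂μ) atTop (nhds 0) →
        q' =ᵐ[μ] q := by
  obtain ⟨c, hc, hDc⟩ := hDpos
  have hDnn (y : Ksp) : 0 ≤ ⟪y, D y⟫ := le_trans (by positivity) (hDc y)
  have hint := hgauss.integrable_cylQuadForm hDnn A
  have hb := (tendsto_tsum_mul_norm_sub_trunc horth hsum).const_mul (2 * ‖D‖)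
  rw [mul_zero] at hb
  obtain ⟨q, hq, hlim⟩ := exists_tendsto_integral_abs_sub hint hb
    (hgauss.integral_abs_cylQuadForm_sub_le hDnn horth hsum hA)
  refine ⟨q, hq, hlim, ?_, ?_, fun q' hq' hlim' =>
    ae_eq_of_tendsto_integral_abs_sub hint hq hq' hlim hlim'⟩
  · exact le_of_tendsto' (tendsto_integral_abs_of_tendsto_integral_abs_sub hint hq hlim)
      (hgauss.integral_abs_cylQuadForm_le hDnn horth hsum hA)
  · refine tendsto_nhds_unique (tendsto_integral_of_tendsto_integral_abs_sub hint hq hlim) ?_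
    simpa only [hgauss.integral_cylQuadForm hDnn horth hsum hA] using
      tendsto_tsum_inner_trunc D horth hsum
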